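/- There exists an absolute constant c > 0 with the following property. Let P be the orthogonal projection onto a subspace drawn uniformly (Haar measure) from the Grassmannian G_{n,p} of p-dimensional subspaces of R^n, and let v, w ∈ R^n be fixed unit vectors. Then for any δ ∈ (0,1], with probability at least 1 − 2^{−cpδ²}: vᵀ P w ≤ (p/n) · ( vᵀw + δ ). -/

import Mathlib

/-!
The proof is a Chernoff bound for `n · vᵀPw`. The point is a bound on the exponential moments with
constant `1` in front, because the probability `1 - 2^(-cpδ²)` leaves no room for a multiplicative
loss when `pδ²` is small; in particular a union bound over two quadratic forms is not enough.

For a unit vector `u`, let `Z = uᵀPu` and let `x` be a standard Gaussian vector in `ℝⁿ` independent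
of `P`. Since `E‖x‖² = n`, Jensen's inequality gives `E exp(s n Z) ≤ E exp(s ‖x‖² Z)`. The law of
`P` is rotation invariant, so for each fixed `x` the variables `‖x‖² Z` and `xᵀPx` have the same law
(`lintegral_quadForm_eq`). For each fixed `P`, `xᵀPx` is chi-squared with `p` degrees of freedom, so
`E exp(s xᵀPx) = (1 - 2s)^(-p/2) ≤ exp(p(s + 2s²))` for `|s| ≤ 1/4`
(`lintegral_exp_projection_le`). This gives `E exp(s(nZ - p)) ≤ exp(2ps²)` for both signs of `s`
(`lintegral_exp_quadForm_le`).

By polarization, `vᵀPw` is `α aᵀPa - β bᵀPb` with unit vectors `a`, `b` and weights `α + β = 1`,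
`α - β = vᵀw`. Convexity of `exp` with these weights transfers the bound to
`E exp(s(n vᵀPw - p vᵀw)) ≤ exp(2ps²)` (`lintegral_exp_bilinear_le`). Markov's inequality with
`s = δ/4` bounds the failure probability by `exp(-pδ²/8)`.
-/

open MeasureTheory ProbabilityTheory Filter Real Matrix NNReal

noncomputable section

/-- Euclidean norm of a vector in `ℝ^p`. -/
def euclNorm {p : ℕ} (v : Fin p → ℝ) : ℝ := Real.sqrt (∑ j, v j ^ 2)

/-- Spectral (operator) norm of a matrix. -/
def specNorm {m p : ℕ} (A : Matrix (Fin m) (Fin p) ℝ) : ℝ :=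
  sSup {r | ∃ v : Fin p → ℝ, euclNorm v = 1 ∧ r = euclNorm (A.mulVec v)}

/-- The ψ_α norm of a real-valued random variable. -/
def psiNorm {Ω : Type*} [MeasurableSpace Ω] (μ : Measure Ω) (a : ℝ) (z : Ω → ℝ) : ℝ :=
  sInf {t : ℝ | 0 < t ∧ ∫ ω, Real.exp (|z ω| ^ a / t ^ a) ∂μ ≤ Real.exp 1}

/-- The ψ_α norm of a random vector. -/
def vecPsiNorm {Ω : Type*} [MeasurableSpace Ω] (μ : Measure Ω) (a : ℝ) {p : ℕ}
    (z : Ω → Fin p → ℝ) : ℝ :=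
  sSup {r | ∃ v : Fin p → ℝ, euclNorm v = 1 ∧ r = psiNorm μ a (fun ω => ∑ j, v j * z ω j)}

/-- A real random variable is sub-Gaussian: it has finite ψ₂-norm. -/
def SubGaussianRV {Ω : Type*} [MeasurableSpace Ω] (μ : Measure Ω) (z : Ω → ℝ) : Prop :=
  ∃ t > 0, ∫ ω, Real.exp (|z ω| ^ 2 / t ^ 2) ∂μ ≤ Real.exp 1

/-- A real random variable is sub-exponential: it has finite ψ₁-norm. -/
def SubExponentialRV {Ω : Type*} [MeasurableSpace Ω] (μ : Measure Ω) (z : Ω → ℝ) : Prop :=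
  ∃ t > 0, ∫ ω, Real.exp (|z ω| / t) ∂μ ≤ Real.exp 1

/-- A random vector is sub-Gaussian: finite ψ₂-norm uniformly over unit directions. -/
def SubGaussianVec {Ω : Type*} [MeasurableSpace Ω] (μ : Measure Ω) {p : ℕ}
    (z : Ω → Fin p → ℝ) : Prop :=
  ∃ t > 0, ∀ v : Fin p → ℝ, euclNorm v = 1 →
    ∫ ω, Real.exp (|∑ j, v j * z ω j| ^ 2 / t ^ 2) ∂μ ≤ Real.exp 1

/-- OLS estimator computed from the samples indexed by `S` (normal equations form:
`β̂_S = (X_Sᵀ X_S)⁻¹ X_Sᵀ y_S`, where `X_Sᵀ X_S = ∑_{i ∈ S} x_i x_iᵀ` and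
`X_Sᵀ y_S = ∑_{i ∈ S} y_i x_i`). -/
def olsSub {n p : ℕ} (X : Matrix (Fin n) (Fin p) ℝ) (y : Fin n → ℝ) (S : Finset (Fin n)) :
    Fin p → ℝ :=
  Matrix.mulVec (∑ i ∈ S, Matrix.vecMulVec (X i) (X i))⁻¹ (∑ i ∈ S, y i • X i)

/-- OLS estimator on the full data. -/
def ols {n p : ℕ} (X : Matrix (Fin n) (Fin p) ℝ) (y : Fin n → ℝ) : Fin p → ℝ :=
  olsSub X y Finset.univ

/-- `max_{S ⊆ [n], |S| ≥ n-k} ‖β̂ - β̂_S‖`. -/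
def maxDev {n p : ℕ} (k : ℕ) (X : Matrix (Fin n) (Fin p) ℝ) (y : Fin n → ℝ) : ℝ :=
  ⨆ S : {S : Finset (Fin n) // n - k ≤ S.card}, euclNorm (ols X y - olsSub X y S.1)

/-- `Δ_k(v) = max_{S ⊂ [n], |S| = n-k} ⟨β̂ - β̂_S, v⟩`. -/
def Deltak {n p : ℕ} (k : ℕ) (X : Matrix (Fin n) (Fin p) ℝ) (y : Fin n → ℝ)
    (v : Fin p → ℝ) : ℝ :=
  ⨆ S : {S : Finset (Fin n) // S.card = n - k},
    ∑ j, (ols X y j - olsSub X y S.1 j) * v j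

/-- The `q`-quantile of a measure on `ℝ`. -/
def quantile (ν : Measure ℝ) (q : ℝ) : ℝ := sInf {x : ℝ | q ≤ (ν (Set.Iic x)).toReal}

/-- The distribution of `ε·z` where `ε ~ ν` and `z ~ N(0,1)` are independent. -/
def mulGaussMeasure (ν : Measure ℝ) : Measure ℝ :=
  Measure.map (fun w : ℝ × ℝ => w.1 * w.2) (ν.prod (gaussianReal 0 1))

/-! ### Elementary inequalities for the Gaussian factor `(1 - 2a)^(-1/2)` -/

/-- Equivalent to `-log (1 - t) ≤ t + t²`. -/
lemma one_le_one_sub_mul_exp {t : ℝ} (ht : |t| ≤ 1 / 2) : 1 ≤ (1 - t) * exp (t + t ^ 2) := by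
  obtain ⟨h1, h2⟩ := abs_le.mp ht
  rcases le_total 0 t with h | h
  · have hq := quadratic_le_exp_of_nonneg (x := t + t ^ 2) (by positivity)
    refine le_trans ?_ (mul_le_mul_of_nonneg_left hq (by linarith))
    have : 0 ≤ t ^ 2 * ((1 - t) * (1 + t) ^ 2 / 2 - t) := by
      apply mul_nonneg (sq_nonneg _)
      nlinarith [mul_nonneg h (sub_nonneg.2 h2), mul_nonneg h (mul_nonneg h (sub_nonneg.2 h2))]
    nlinarith
  · have hy : |-(t + t ^ 2)| ≤ 1 := by
      rw [abs_le]; constructor <;> nlinarith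
    have he := (abs_le.mp (abs_exp_sub_one_sub_id_le hy)).2
    have hle : exp (-(t + t ^ 2)) ≤ 1 - t := by
      have : 0 ≤ t ^ 2 * (1 - (1 + t) ^ 2) := by
        apply mul_nonneg (sq_nonneg _)
        nlinarith
      nlinarith
    calc (1 : ℝ) = exp (-(t + t ^ 2)) * exp (t + t ^ 2) := by rw [← exp_add]; simp
      _ ≤ _ := by gcongr

lemma inv_sqrt_le_exp {s : ℝ} (hs : |s| ≤ 1 / 4) :
    (√(1 - 2 * s))⁻¹ ≤ exp (s + 2 * s ^ 2) := by
  have h := one_le_one_sub_mul_exp (t := 2 * s) (by rw [abs_mul]; norm_num; linarith)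
  have hs' := abs_le.mp hs
  rw [inv_le_iff_one_le_mul₀ (by apply Real.sqrt_pos.2; linarith)]
  rw [← Real.sqrt_sq (exp_pos (s + 2 * s ^ 2)).le, ← Real.sqrt_mul (by positivity)]
  apply Real.le_sqrt_of_sq_le
  rw [← exp_nat_mul]
  have : ((2 : ℕ) : ℝ) * (s + 2 * s ^ 2) = 2 * s + (2 * s) ^ 2 := by push_cast; ring
  rw [this]; linarith

lemma exp_le_inv_sqrt {a : ℝ} (ha : a < 1 / 2) : exp a ≤ (√(1 - 2 * a))⁻¹ := by
  rw [le_inv_comm₀ (exp_pos _) (by apply Real.sqrt_pos.2; linarith), ← Real.exp_neg]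
  apply Real.sqrt_le_iff.2 ⟨(exp_pos _).le, ?_⟩
  rw [← exp_nat_mul]
  have := add_one_le_exp (-(2 * a))
  push_cast
  rw [mul_neg]; linarith

/-! ### Gaussian integrals of exponentials of quadratic forms -/

lemma lintegral_exp_mul_sq_gaussianReal {a : ℝ} (ha : a < 1 / 2) :
    ∫⁻ x, ENNReal.ofReal (exp (a * x ^ 2)) ∂(gaussianReal 0 1)
      = ENNReal.ofReal (√(1 - 2 * a))⁻¹ := by
  have hb : 0 < 1 / 2 - a := by linarith
  rw [gaussianReal_of_var_ne_zero _ one_ne_zero,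
    lintegral_withDensity_eq_lintegral_mul _ (measurable_gaussianPDF 0 1) (by fun_prop)]
  have hpt : ∀ x : ℝ, (gaussianPDF 0 1 * fun x => ENNReal.ofReal (exp (a * x ^ 2))) x
      = ENNReal.ofReal ((√(2 * π))⁻¹ * exp (-(1 / 2 - a) * x ^ 2)) := by
    intro x
    rw [Pi.mul_apply, gaussianPDF, ← ENNReal.ofReal_mul (gaussianPDFReal_nonneg _ _ _),
      gaussianPDFReal]
    simp only [NNReal.coe_one, mul_one, sub_zero]
    rw [mul_assoc, ← Real.exp_add]
    congr 3
    ring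
  simp_rw [hpt]
  rw [← ofReal_integral_eq_lintegral_ofReal ((integrable_exp_neg_mul_sq hb).const_mul _)
    (ae_of_all _ fun x => by positivity), integral_const_mul, integral_gaussian]
  congr 1
  have hpi := Real.pi_pos
  have h2 : 0 < 1 - 2 * a := by linarith
  rw [← Real.sqrt_inv, ← Real.sqrt_inv, ← Real.sqrt_mul (by positivity)]
  congr 1
  have : (1 / 2 - a) = (1 - 2 * a) / 2 := by ring
  rw [this]
  field_simp

/-- The standard Gaussian measure on `ℝⁿ`, as a product measure on `Fin n → ℝ` (rather than
Mathlib's `stdGaussian` on `EuclideanSpace`), so that it is used directly with `⬝ᵥ` and `*ᵥ`. -/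
def stdGauss (n : ℕ) : Measure (Fin n → ℝ) := Measure.pi fun _ => gaussianReal 0 1

instance (n : ℕ) : IsProbabilityMeasure (stdGauss n) := by unfold stdGauss; infer_instance

lemma lintegral_exp_sum_stdGauss {n : ℕ} (a : Fin n → ℝ) (ha : ∀ i, a i < 1 / 2) :
    ∫⁻ x, ENNReal.ofReal (exp (∑ i, a i * x i ^ 2)) ∂(stdGauss n)
      = ∏ i, ENNReal.ofReal (√(1 - 2 * a i))⁻¹ := by
  have hind : iIndepFun (fun i (x : Fin n → ℝ) => ENNReal.ofReal (exp (a i * x i ^ 2)))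
      (stdGauss n) :=
    iIndepFun_pi (X := fun i (t : ℝ) => ENNReal.ofReal (exp (a i * t ^ 2)))
      (fun i => by fun_prop)
  have h := lintegral_prod_eq_prod_lintegral_of_indepFun Finset.univ _ hind (fun i => by fun_prop)
  simp_rw [exp_sum, ENNReal.ofReal_prod_of_nonneg (fun _ _ => (exp_pos _).le)]
  rw [h]
  refine Finset.prod_congr rfl fun i _ => ?_
  rw [← lintegral_exp_mul_sq_gaussianReal (ha i)]
  exact (measurePreserving_eval (fun _ : Fin n => gaussianReal 0 1) i).lintegral_comp
    (f := fun t => ENNReal.ofReal (exp (a i * t ^ 2))) (by fun_prop)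

/-- Diagonalization under the Gaussian: by rotation invariance of the Gaussian law, the coordinates
in an orthonormal eigenbasis of `A` are again independent standard Gaussians. -/
lemma lintegral_stdGauss_eigenbasis {n : ℕ} {A : Matrix (Fin n) (Fin n) ℝ} (hA : A.IsHermitian)
    (f : ℝ → ENNReal) (hf : Measurable f) :
    ∫⁻ x, f (x ⬝ᵥ A *ᵥ x) ∂(stdGauss n)
      = ∫⁻ x, f (∑ i, hA.eigenvalues i * x i ^ 2) ∂(stdGauss n) := by
  have h1 := map_pi_eq_stdGaussian (ι := Fin n)
  rw [stdGaussian_eq_map_pi_orthonormalBasis hA.eigenvectorBasis] at h1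
  have h2 := congrArg (fun ν => ∫⁻ y : EuclideanSpace ℝ (Fin n), f (y.ofLp ⬝ᵥ A *ᵥ y.ofLp) ∂ν) h1
  have hm : Measurable fun y : EuclideanSpace ℝ (Fin n) => f (y.ofLp ⬝ᵥ A *ᵥ y.ofLp) := by
    apply hf.comp
    unfold dotProduct mulVec dotProduct
    fun_prop
  beta_reduce at h2
  rw [lintegral_map hm (by fun_prop), lintegral_map hm (by fun_prop)] at h2
  refine h2.trans (lintegral_congr fun x => congrArg f ?_)
  set b := hA.eigenvectorBasis
  have h3 : A *ᵥ (∑ i, x i • b i).ofLp = (∑ i, (hA.eigenvalues i * x i) • b i).ofLp := by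
    simp only [WithLp.ofLp_sum, WithLp.ofLp_smul, mulVec_sum, mulVec_smul, b,
      hA.mulVec_eigenvectorBasis, smul_smul, mul_comm]
  rw [h3]
  have h4 : inner ℝ (∑ i, (hA.eigenvalues i * x i) • b i) (∑ i, x i • b i)
      = ∑ i, hA.eigenvalues i * x i ^ 2 := by
    rw [b.orthonormal.inner_sum]
    simp [pow_two, mul_assoc]
  rw [← h4, EuclideanSpace.inner_eq_star_dotProduct]
  simp

/-- For `A` a projection of rank `p`, `xᵀAx` is chi-squared with `p` degrees of freedom under the
Gaussian; its moment generating function at `s` is `(1 - 2s)^(-p/2)`. -/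
lemma lintegral_exp_projection_le {n p : ℕ} {A : Matrix (Fin n) (Fin n) ℝ} (hs : Aᵀ = A)
    (hi : A * A = A) (hr : A.rank = p) {s : ℝ} (h : |s| ≤ 1 / 4) :
    ∫⁻ x, ENNReal.ofReal (exp (s * (x ⬝ᵥ A *ᵥ x))) ∂(stdGauss n)
      ≤ ENNReal.ofReal (exp (p * (s + 2 * s ^ 2))) := by
  have hA : A.IsHermitian := by rw [IsHermitian, conjTranspose_eq_transpose_of_trivial, hs]
  have hs' := abs_le.mp h
  have hev : ∀ i, hA.eigenvalues i = 0 ∨ hA.eigenvalues i = 1 := by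
    intro i
    have h1 := hA.mulVec_eigenvectorBasis i
    have h2 : A *ᵥ (A *ᵥ (hA.eigenvectorBasis i).ofLp)
        = A *ᵥ (hA.eigenvalues i • (hA.eigenvectorBasis i).ofLp) := congrArg (A *ᵥ ·) h1
    rw [mulVec_mulVec, hi, mulVec_smul, h1, smul_smul] at h2
    have h3 : (hA.eigenvalues i - hA.eigenvalues i * hA.eigenvalues i) •
        hA.eigenvectorBasis i = 0 := by
      rw [sub_smul, sub_eq_zero]
      exact WithLp.ofLp_injective 2 h2
    have h4 := (smul_eq_zero.1 h3).resolve_right (hA.eigenvectorBasis.orthonormal.ne_zero i)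
    have h5 : hA.eigenvalues i * (hA.eigenvalues i - 1) = 0 := by linarith
    rcases mul_eq_zero.1 h5 with h | h
    · exact Or.inl h
    · right; linarith
  have hsum : ∑ i, hA.eigenvalues i = p := by
    rw [← hr, hA.rank_eq_card_non_zero_eigs, Fintype.card_subtype, Finset.card_filter]
    push_cast
    refine Finset.sum_congr rfl fun i _ => ?_
    rcases hev i with h | h <;> simp [h]
  rw [lintegral_stdGauss_eigenbasis hA (fun t => ENNReal.ofReal (exp (s * t))) (by fun_prop)]
  simp_rw [Finset.mul_sum, ← mul_assoc]
  rw [lintegral_exp_sum_stdGauss, ← hsum, Finset.sum_mul, exp_sum,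
    ENNReal.ofReal_prod_of_nonneg (fun _ _ => (exp_pos _).le)]
  · refine Finset.prod_le_prod' fun i _ => ENNReal.ofReal_le_ofReal ?_
    rcases hev i with h0 | h0 <;> rw [h0]
    · simp
    · simpa using inv_sqrt_le_exp h
  · intro i
    rcases hev i with h0 | h0 <;> rw [h0] <;> linarith

/-- Jensen's inequality for `‖x‖²`, whose Gaussian mean is `n`; obtained here from the exact value
`(1 - 2a)^(-n/2)` of the right-hand side. -/
lemma exp_le_lintegral_stdGauss {n : ℕ} {a : ℝ} (ha : a < 1 / 2) :
    ENNReal.ofReal (exp (n * a))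
      ≤ ∫⁻ x, ENNReal.ofReal (exp (a * (x ⬝ᵥ x))) ∂(stdGauss n) := by
  have := lintegral_exp_sum_stdGauss (n := n) (fun _ => a) (fun _ => ha)
  simp only [dotProduct, Finset.mul_sum, ← pow_two, this]
  rw [exp_nat_mul, ENNReal.ofReal_pow (exp_pos _).le, Finset.prod_const, Finset.card_univ,
    Fintype.card_fin]
  gcongr
  exact exp_le_inv_sqrt ha

/-! ### Rotation invariance of the random projection -/

/-- The orthogonal group acts transitively on spheres: the Householder reflection along `a - b`
exchanges `a` and `b`. -/
lemma exists_orthogonal_mulVec_eq {n : ℕ} (a b : Fin n → ℝ) (h : a ⬝ᵥ a = b ⬝ᵥ b) :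
    ∃ U : Matrix (Fin n) (Fin n) ℝ, U * Uᵀ = 1 ∧ Uᵀ *ᵥ a = b := by
  by_cases hab : a = b
  · exact ⟨1, by simp, by simp [hab]⟩
  set d := a - b with hd
  have hdd : d ⬝ᵥ d ≠ 0 := by
    rw [Ne, dotProduct_self_eq_zero]; exact sub_ne_zero.2 hab
  have hda : d ⬝ᵥ d = 2 * (d ⬝ᵥ a) := by
    simp only [hd, sub_dotProduct, dotProduct_sub, dotProduct_comm b a]; linarith
  have hT : (1 - (2 / (d ⬝ᵥ d)) • vecMulVec d d)ᵀ = 1 - (2 / (d ⬝ᵥ d)) • vecMulVec d d := by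
    simp [transpose_vecMulVec]
  refine ⟨1 - (2 / (d ⬝ᵥ d)) • vecMulVec d d, ?_, ?_⟩
  · have hDD : vecMulVec d d * vecMulVec d d = (d ⬝ᵥ d) • vecMulVec d d := by
      rw [vecMulVec_mul_vecMulVec, vecMulVec_smul]
    have hk : 2 / (d ⬝ᵥ d) * (2 / (d ⬝ᵥ d)) * (d ⬝ᵥ d) = 2 / (d ⬝ᵥ d) + 2 / (d ⬝ᵥ d) := by
      field_simp; ring
    rw [hT, sub_mul, one_mul, mul_sub, mul_one, smul_mul_assoc,
      mul_smul_comm, hDD, smul_smul, smul_smul, hk, add_smul]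
    abel
  · have h1 : (2 / (d ⬝ᵥ d)) * (d ⬝ᵥ a) = 1 := by
      rw [div_mul_eq_mul_div, ← hda]; exact div_self hdd
    rw [hT, sub_mulVec, one_mulVec, smul_mulVec, vecMulVec_mulVec, op_smul_eq_smul, smul_smul, h1,
      one_smul, hd, sub_sub_cancel]

lemma measurable_quadForm {Ω : Type} [MeasurableSpace Ω] {n : ℕ}
    {P : Ω → Matrix (Fin n) (Fin n) ℝ}
    (hP : ∀ i j, Measurable fun ω => P ω i j) :
    Measurable fun z : Ω × (Fin n → ℝ) => z.2 ⬝ᵥ P z.1 *ᵥ z.2 := by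
  unfold dotProduct mulVec dotProduct
  refine Finset.measurable_sum _ fun i _ => Measurable.mul (by fun_prop) ?_
  exact Finset.measurable_sum _ fun j _ =>
    ((hP i j).comp measurable_fst).mul (by fun_prop)

/-- By rotation invariance, the law of `aᵀPa` depends only on `‖a‖`. -/
lemma lintegral_quadForm_eq {Ω : Type} [MeasurableSpace Ω] {μ : Measure Ω} {n : ℕ}
    {P : Ω → Matrix (Fin n) (Fin n) ℝ} (hP : ∀ i j, Measurable fun ω => P ω i j)
    (hinv : ∀ U : Matrix (Fin n) (Fin n) ℝ, U * Uᵀ = 1 →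
          Measure.map (fun ω => fun i j => (U * P ω * Uᵀ) i j) μ
            = Measure.map (fun ω => fun i j => P ω i j) μ)
    {a b : Fin n → ℝ} (h : a ⬝ᵥ a = b ⬝ᵥ b) (f : ℝ → ENNReal) (hf : Measurable f) :
    ∫⁻ ω, f (a ⬝ᵥ P ω *ᵥ a) ∂μ = ∫⁻ ω, f (b ⬝ᵥ P ω *ᵥ b) ∂μ := by
  obtain ⟨U, hU, hab⟩ := exists_orthogonal_mulVec_eq a b h
  have h1 := congrArg (fun ν => ∫⁻ M : Fin n → Fin n → ℝ, f (a ⬝ᵥ Matrix.of M *ᵥ a) ∂ν) (hinv U hU)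
  have hm : Measurable fun M : Fin n → Fin n → ℝ => f (a ⬝ᵥ Matrix.of M *ᵥ a) := by
    apply hf.comp
    simp only [dotProduct, mulVec, of_apply]
    fun_prop
  have hm1 : Measurable fun ω => fun i j => P ω i j :=
    measurable_pi_lambda _ fun i => measurable_pi_lambda _ fun j => hP i j
  have hm2 : Measurable fun ω => fun i j => (U * P ω * Uᵀ) i j := by
    refine measurable_pi_lambda _ fun i => measurable_pi_lambda _ fun j => ?_
    simp only [mul_apply]
    refine Finset.measurable_sum _ fun k _ => Measurable.mul ?_ measurable_const
    exact Finset.measurable_sum _ fun l _ => measurable_const.mul (hP l k)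
  beta_reduce at h1
  rw [lintegral_map hm hm1, lintegral_map hm hm2] at h1
  refine Eq.trans h1.symm (lintegral_congr fun ω => congrArg f ?_)
  change a ⬝ᵥ (U * P ω * Uᵀ) *ᵥ a = _
  rw [← mulVec_mulVec, hab, ← mulVec_mulVec, dotProduct_mulVec, ← mulVec_transpose, hab]

/-! ### Exponential moments of `uᵀPu` and `vᵀPw` -/

/-- Upper bound for the exponential moments of `n · uᵀPu`, `u` a unit vector. The vector `u` is
compared with an auxiliary Gaussian vector `x` independent of `P`: Jensen's inequality replaces `n`
by `‖x‖²`, rotation invariance replaces `‖x‖² uᵀPu` by `xᵀPx`, and for fixed `P` the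
Gaussian integral is explicit. -/
lemma lintegral_exp_quadForm_le {Ω : Type} [MeasurableSpace Ω] {μ : Measure Ω}
    [IsProbabilityMeasure μ] {n p : ℕ}
    {P : Ω → Matrix (Fin n) (Fin n) ℝ} (hP : ∀ i j, Measurable fun ω => P ω i j)
    (hs : ∀ ω, (P ω)ᵀ = P ω) (hi : ∀ ω, P ω * P ω = P ω) (hr : ∀ ω, (P ω).rank = p)
    (hinv : ∀ U : Matrix (Fin n) (Fin n) ℝ, U * Uᵀ = 1 →
          Measure.map (fun ω => fun i j => (U * P ω * Uᵀ) i j) μ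
            = Measure.map (fun ω => fun i j => P ω i j) μ)
    {u : Fin n → ℝ} (hu : u ⬝ᵥ u = 1) {s : ℝ} (h : |s| ≤ 1 / 4) :
    ∫⁻ ω, ENNReal.ofReal (exp (s * (n * (u ⬝ᵥ P ω *ᵥ u)))) ∂μ
      ≤ ENNReal.ofReal (exp (p * (s + 2 * s ^ 2))) := by
  have hs' := abs_le.mp h
  have hmZ : Measurable fun ω => u ⬝ᵥ P ω *ᵥ u :=
    (measurable_quadForm hP).comp (measurable_id.prodMk measurable_const)
  have hself : ∀ ω (y : Fin n → ℝ), y ⬝ᵥ P ω *ᵥ y = (P ω *ᵥ y) ⬝ᵥ (P ω *ᵥ y) := by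
    intro ω y
    conv_lhs => rw [← hi ω, ← mulVec_mulVec, dotProduct_mulVec, ← mulVec_transpose, hs]
  have hZ0 : ∀ ω, 0 ≤ u ⬝ᵥ P ω *ᵥ u := fun ω => by
    rw [hself]; exact Finset.sum_nonneg fun i _ => mul_self_nonneg _
  -- `1 - uᵀPu = ‖u - Pu‖²`
  have hZ1 : ∀ ω, u ⬝ᵥ P ω *ᵥ u ≤ 1 := fun ω => by
    have h0 : 0 ≤ (u - P ω *ᵥ u) ⬝ᵥ (u - P ω *ᵥ u) :=
      Finset.sum_nonneg fun i _ => mul_self_nonneg _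
    simp only [sub_dotProduct, dotProduct_sub, ← hself, hu, dotProduct_comm (P ω *ᵥ u) u] at h0
    linarith
  calc ∫⁻ ω, ENNReal.ofReal (exp (s * (n * (u ⬝ᵥ P ω *ᵥ u)))) ∂μ
      ≤ ∫⁻ ω, ∫⁻ x, ENNReal.ofReal (exp (s * (u ⬝ᵥ P ω *ᵥ u) * (x ⬝ᵥ x))) ∂(stdGauss n) ∂μ := by
        refine lintegral_mono fun ω => ?_
        have ha : s * (u ⬝ᵥ P ω *ᵥ u) < 1 / 2 := by nlinarith [hZ0 ω, hZ1 ω]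
        refine le_trans (le_of_eq ?_) (exp_le_lintegral_stdGauss (n := n) ha)
        congr 2; ring
    _ = ∫⁻ x, ∫⁻ ω, ENNReal.ofReal (exp (s * (u ⬝ᵥ P ω *ᵥ u) * (x ⬝ᵥ x))) ∂μ ∂(stdGauss n) := by
        refine lintegral_lintegral_swap (Measurable.aemeasurable ?_)
        have h1 : Measurable fun z : Ω × (Fin n → ℝ) => u ⬝ᵥ P z.1 *ᵥ u := hmZ.comp measurable_fst
        have h2 : Measurable fun z : Ω × (Fin n → ℝ) => z.2 ⬝ᵥ z.2 := by
          unfold dotProduct; fun_prop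
        exact ((((h1.const_mul s).mul h2).exp).ennreal_ofReal)
    _ = ∫⁻ x, ∫⁻ ω, ENNReal.ofReal (exp (s * (x ⬝ᵥ P ω *ᵥ x))) ∂μ ∂(stdGauss n) := by
        refine lintegral_congr fun x => ?_
        have hx : 0 ≤ x ⬝ᵥ x := Finset.sum_nonneg fun i _ => mul_self_nonneg _
        have hxx : x ⬝ᵥ x = (√(x ⬝ᵥ x) • u) ⬝ᵥ (√(x ⬝ᵥ x) • u) := by
          rw [smul_dotProduct, dotProduct_smul, hu, smul_smul, Real.mul_self_sqrt hx]; simp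
        rw [lintegral_quadForm_eq hP hinv hxx (fun t => ENNReal.ofReal (exp (s * t)))
          (by fun_prop)]
        refine lintegral_congr fun ω => ?_
        rw [mulVec_smul, smul_dotProduct, dotProduct_smul, smul_smul, Real.mul_self_sqrt hx,
          smul_eq_mul]
        congr 2; ring
    _ = ∫⁻ ω, ∫⁻ x, ENNReal.ofReal (exp (s * (x ⬝ᵥ P ω *ᵥ x))) ∂(stdGauss n) ∂μ := by
        refine (lintegral_lintegral_swap (Measurable.aemeasurable ?_)).symm
        exact (((measurable_quadForm hP).const_mul s).exp).ennreal_ofReal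
    _ ≤ ∫⁻ _, ENNReal.ofReal (exp (p * (s + 2 * s ^ 2))) ∂μ :=
        lintegral_mono fun ω => lintegral_exp_projection_le (hs ω) (hi ω) (hr ω) h
    _ = _ := by simp

/-- Polar decomposition of a vector, including `a = 0`, for which some unit vector `e` has to be
available. -/
lemma exists_unit_smul {n : ℕ} {e : Fin n → ℝ} (he : e ⬝ᵥ e = 1) (a : Fin n → ℝ) :
    ∃ u : Fin n → ℝ, u ⬝ᵥ u = 1 ∧ a = √(a ⬝ᵥ a) • u := by
  have ha : 0 ≤ a ⬝ᵥ a := Finset.sum_nonneg fun i _ => mul_self_nonneg _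
  obtain ⟨U, hU, h⟩ := exists_orthogonal_mulVec_eq (√(a ⬝ᵥ a) • e) a (by
    rw [smul_dotProduct, dotProduct_smul, he, smul_smul, Real.mul_self_sqrt ha]; simp)
  refine ⟨Uᵀ *ᵥ e, ?_, ?_⟩
  · rw [dotProduct_mulVec, ← mulVec_transpose, transpose_transpose, mulVec_mulVec, hU, one_mulVec,
      he]
  · rw [← mulVec_smul, h]

/-- Centred exponential moments of `n · vᵀPw`. With `α = ‖v + w‖²/4` and `β = ‖v - w‖²/4`, which
satisfy `α + β = 1` and `α - β = vᵀw`, polarization gives `vᵀPw = α aᵀPa - β bᵀPb` for the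
normalized vectors `a`, `b` of `v + w`, `v - w`. Convexity of `exp` with weights `α`, `β` then
reduces to the quadratic case without any multiplicative loss. -/
lemma lintegral_exp_bilinear_le {Ω : Type} [MeasurableSpace Ω] {μ : Measure Ω}
    [IsProbabilityMeasure μ] {n p : ℕ}
    {P : Ω → Matrix (Fin n) (Fin n) ℝ} (hP : ∀ i j, Measurable fun ω => P ω i j)
    (hs : ∀ ω, (P ω)ᵀ = P ω) (hi : ∀ ω, P ω * P ω = P ω) (hr : ∀ ω, (P ω).rank = p)
    (hinv : ∀ U : Matrix (Fin n) (Fin n) ℝ, U * Uᵀ = 1 →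
          Measure.map (fun ω => fun i j => (U * P ω * Uᵀ) i j) μ
            = Measure.map (fun ω => fun i j => P ω i j) μ)
    {v w : Fin n → ℝ} (hv : v ⬝ᵥ v = 1) (hw : w ⬝ᵥ w = 1) {s : ℝ} (h : |s| ≤ 1 / 4) :
    ∫⁻ ω, ENNReal.ofReal (exp (s * (n * (v ⬝ᵥ P ω *ᵥ w) - p * (v ⬝ᵥ w)))) ∂μ
      ≤ ENNReal.ofReal (exp (p * (2 * s ^ 2))) := by
  have key : ∀ (u : Fin n → ℝ), u ⬝ᵥ u = 1 → ∀ t : ℝ, |t| ≤ 1 / 4 →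
      ∫⁻ ω, ENNReal.ofReal (exp (t * (n * (u ⬝ᵥ P ω *ᵥ u) - p))) ∂μ
        ≤ ENNReal.ofReal (exp (p * (2 * t ^ 2))) := by
    intro u hu t ht
    have h1 := lintegral_exp_quadForm_le hP hs hi hr hinv hu ht
    have h2 : ∀ ω, ENNReal.ofReal (exp (t * (n * (u ⬝ᵥ P ω *ᵥ u) - p)))
        = ENNReal.ofReal (exp (t * (n * (u ⬝ᵥ P ω *ᵥ u)))) * ENNReal.ofReal (exp (-(p * t))) := by
      intro ω
      rw [← ENNReal.ofReal_mul (exp_pos _).le, ← Real.exp_add]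
      congr 2; ring
    simp_rw [h2]
    rw [lintegral_mul_const' _ _ ENNReal.ofReal_ne_top]
    refine (mul_le_mul_left h1 _).trans (le_of_eq ?_)
    rw [← ENNReal.ofReal_mul (exp_pos _).le, ← Real.exp_add]
    congr 2; ring
  obtain ⟨a, ha, hva⟩ := exists_unit_smul hv (v + w)
  obtain ⟨b, hb, hvb⟩ := exists_unit_smul hv (v - w)
  set α := (1 + v ⬝ᵥ w) / 2 with hα
  set β := (1 - v ⬝ᵥ w) / 2 with hβ
  have hA : (v + w) ⬝ᵥ (v + w) = 4 * α := by
    simp only [add_dotProduct, dotProduct_add, hv, hw, dotProduct_comm w v, hα]; ring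
  have hB : (v - w) ⬝ᵥ (v - w) = 4 * β := by
    simp only [sub_dotProduct, dotProduct_sub, hv, hw, dotProduct_comm w v, hβ]; ring
  have hα0 : 0 ≤ α := by
    have : 0 ≤ (v + w) ⬝ᵥ (v + w) := Finset.sum_nonneg fun i _ => mul_self_nonneg _
    linarith
  have hβ0 : 0 ≤ β := by
    have : 0 ≤ (v - w) ⬝ᵥ (v - w) := Finset.sum_nonneg fun i _ => mul_self_nonneg _
    linarith
  rw [hA] at hva
  rw [hB] at hvb
  have hsym : ∀ ω, w ⬝ᵥ P ω *ᵥ v = v ⬝ᵥ P ω *ᵥ w := fun ω => by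
    rw [dotProduct_mulVec, ← mulVec_transpose, hs, dotProduct_comm]
  have hpol : ∀ ω, v ⬝ᵥ P ω *ᵥ w = α * (a ⬝ᵥ P ω *ᵥ a) - β * (b ⬝ᵥ P ω *ᵥ b) := by
    intro ω
    have e1 : (v + w) ⬝ᵥ P ω *ᵥ (v + w) = 4 * α * (a ⬝ᵥ P ω *ᵥ a) := by
      rw [hva, mulVec_smul, smul_dotProduct, dotProduct_smul, smul_smul,
        Real.mul_self_sqrt (by positivity), smul_eq_mul]
    have e2 : (v - w) ⬝ᵥ P ω *ᵥ (v - w) = 4 * β * (b ⬝ᵥ P ω *ᵥ b) := by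
      rw [hvb, mulVec_smul, smul_dotProduct, dotProduct_smul, smul_smul,
        Real.mul_self_sqrt (by positivity), smul_eq_mul]
    simp only [mulVec_add, mulVec_sub, add_dotProduct, dotProduct_add, sub_dotProduct,
      dotProduct_sub, hsym] at e1 e2
    linarith
  have hpt : ∀ ω, ENNReal.ofReal (exp (s * (n * (v ⬝ᵥ P ω *ᵥ w) - p * (v ⬝ᵥ w))))
      ≤ ENNReal.ofReal α * ENNReal.ofReal (exp (s * (n * (a ⬝ᵥ P ω *ᵥ a) - p)))
        + ENNReal.ofReal β * ENNReal.ofReal (exp (-s * (n * (b ⬝ᵥ P ω *ᵥ b) - p))) := by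
    intro ω
    rw [← ENNReal.ofReal_mul hα0, ← ENNReal.ofReal_mul hβ0, ← ENNReal.ofReal_add (by positivity)
      (by positivity)]
    apply ENNReal.ofReal_le_ofReal
    have hc := convexOn_exp.2 (Set.mem_univ (s * (n * (a ⬝ᵥ P ω *ᵥ a) - p)))
      (Set.mem_univ (-s * (n * (b ⬝ᵥ P ω *ᵥ b) - p))) hα0 hβ0 (by rw [hα, hβ]; ring)
    simp only [smul_eq_mul] at hc
    refine le_trans (le_of_eq ?_) hc
    congr 1
    rw [hpol ω, show v ⬝ᵥ w = α - β by rw [hα, hβ]; ring]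
    ring
  have hm : ∀ u : Fin n → ℝ, Measurable fun ω => u ⬝ᵥ P ω *ᵥ u := fun u =>
    (measurable_quadForm hP).comp (measurable_id.prodMk measurable_const)
  have hma := hm a
  have hmb := hm b
  calc _ ≤ ∫⁻ ω, (ENNReal.ofReal α * ENNReal.ofReal (exp (s * (n * (a ⬝ᵥ P ω *ᵥ a) - p)))
        + ENNReal.ofReal β * ENNReal.ofReal (exp (-s * (n * (b ⬝ᵥ P ω *ᵥ b) - p)))) ∂μ :=
        lintegral_mono hpt
    _ = ENNReal.ofReal α * ∫⁻ ω, ENNReal.ofReal (exp (s * (n * (a ⬝ᵥ P ω *ᵥ a) - p))) ∂μ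
        + ENNReal.ofReal β * ∫⁻ ω, ENNReal.ofReal (exp (-s * (n * (b ⬝ᵥ P ω *ᵥ b) - p))) ∂μ := by
        rw [lintegral_add_left (by fun_prop), lintegral_const_mul' _ _ ENNReal.ofReal_ne_top,
          lintegral_const_mul' _ _ ENNReal.ofReal_ne_top]
    _ ≤ ENNReal.ofReal α * ENNReal.ofReal (exp (p * (2 * s ^ 2)))
        + ENNReal.ofReal β * ENNReal.ofReal (exp (p * (2 * s ^ 2))) := by
        gcongr
        · exact key a ha s h
        · simpa using key b hb (-s) (by rwa [abs_neg])
    _ = _ := by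
        rw [← add_mul, ← ENNReal.ofReal_add hα0 hβ0, show α + β = 1 by rw [hα, hβ]; ring]
        simp

/-! ### The tail bound -/

/-- **Theorem (Statement 15).** Johnson–Lindenstrauss-type bound for a uniformly random
`p`-dimensional subspace of `ℝⁿ`. The random orthogonal projection `P` onto a subspace
drawn uniformly (Haar) from the Grassmannian `G_{n,p}` is characterized as a random
rank-`p` orthogonal projection matrix whose distribution is invariant under conjugation by
every orthogonal matrix (the orthogonal group acts transitively on `G_{n,p}`, so this
rotation invariance pins down the uniform distribution). For fixed unit vectors `v, w`,
with probability at least `1 - 2^{-cpδ²}`, `vᵀPw ≤ (p/n)(vᵀw + δ)`. -/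
theorem grassmannian_projection_inner_product_bound :
    ∃ c > (0 : ℝ),
      ∀ (Ω : Type) (_ : MeasurableSpace Ω) (μ : Measure Ω), IsProbabilityMeasure μ →
      ∀ (n p : ℕ) (P : Ω → Matrix (Fin n) (Fin n) ℝ),
        (∀ i j, Measurable fun ω => P ω i j) →
        -- P is an orthogonal projection of rank p
        (∀ ω, (P ω)ᵀ = P ω) →
        (∀ ω, P ω * P ω = P ω) →
        (∀ ω, (P ω).rank = p) →
        -- the distribution of P is invariant under every rotation of ℝⁿ,
        -- i.e. the range of P is uniform on the Grassmannian G_{n,p}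
        (∀ U : Matrix (Fin n) (Fin n) ℝ, U * Uᵀ = 1 →
          Measure.map (fun ω => fun i j => (U * P ω * Uᵀ) i j) μ
            = Measure.map (fun ω => fun i j => P ω i j) μ) →
      ∀ (v w : Fin n → ℝ), euclNorm v = 1 → euclNorm w = 1 →
      ∀ δ : ℝ, 0 < δ → δ ≤ 1 →
        ENNReal.ofReal (1 - (2 : ℝ) ^ (-(c * p * δ ^ 2)))
          ≤ μ {ω | ∑ i, v i * Matrix.mulVec (P ω) w i
              ≤ ((p : ℝ) / n) * ((∑ i, v i * w i) + δ)} := by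
  -- the Chernoff bound is `exp (-pδ²/8)`, and `exp (-x) ≤ 2 ^ (-x)` for `x ≥ 0`
  refine ⟨1 / 8, by norm_num, ?_⟩
  intro Ω _ μ _ n p P hP hs hi hr hinv v w hv hw δ hδ hδ1
  have hunit : ∀ {y : Fin n → ℝ}, euclNorm y = 1 → y ⬝ᵥ y = 1 := by
    intro y hy
    rw [euclNorm, Real.sqrt_eq_one] at hy
    rw [← hy]; simp [dotProduct, pow_two]
  -- a unit vector exists only in positive dimension
  have hn : 0 < (n : ℝ) := by
    rcases Nat.eq_zero_or_pos n with rfl | h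
    · simp [euclNorm] at hv
    · exact_mod_cast h
  change _ ≤ μ {ω | v ⬝ᵥ P ω *ᵥ w ≤ ((p : ℝ) / n) * (v ⬝ᵥ w + δ)}
  have hmT : Measurable fun ω => v ⬝ᵥ P ω *ᵥ w := by
    unfold dotProduct mulVec dotProduct
    exact Finset.measurable_sum _ fun i _ => measurable_const.mul
      (Finset.measurable_sum _ fun j _ => (hP i j).mul measurable_const)
  have hmS : MeasurableSet {ω | v ⬝ᵥ P ω *ᵥ w ≤ ((p : ℝ) / n) * (v ⬝ᵥ w + δ)} :=
    measurableSet_le hmT measurable_const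
  -- `s = δ / 4` minimizes the Chernoff exponent `2ps² - spδ`, with value `-pδ²/8`
  have hmgf := lintegral_exp_bilinear_le hP hs hi hr hinv (hunit hv) (hunit hw) (s := δ / 4)
    (by rw [abs_of_pos (by positivity)]; linarith)
  have hsub : {ω | v ⬝ᵥ P ω *ᵥ w ≤ ((p : ℝ) / n) * (v ⬝ᵥ w + δ)}ᶜ
      ⊆ {ω | ENNReal.ofReal (exp (p * δ ^ 2 / 4)) ≤
        ENNReal.ofReal (exp (δ / 4 * (n * (v ⬝ᵥ P ω *ᵥ w) - p * (v ⬝ᵥ w))))} := by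
    intro ω hω
    simp only [Set.mem_compl_iff, Set.mem_ofPred_eq, not_le] at hω ⊢
    apply ENNReal.ofReal_le_ofReal
    apply Real.exp_le_exp.2
    rw [div_mul_eq_mul_div, div_lt_iff₀ hn] at hω
    nlinarith
  have hbad : μ {ω | v ⬝ᵥ P ω *ᵥ w ≤ ((p : ℝ) / n) * (v ⬝ᵥ w + δ)}ᶜ
      ≤ ENNReal.ofReal (exp (-(p * δ ^ 2 / 8))) := by
    refine (measure_mono hsub).trans ?_
    refine (meas_ge_le_lintegral_div (Measurable.aemeasurable (by fun_prop)) (by simp [exp_pos])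
      ENNReal.ofReal_ne_top).trans ?_
    refine (ENNReal.div_le_div_right hmgf _).trans (le_of_eq ?_)
    rw [← ENNReal.ofReal_div_of_pos (exp_pos _), ← Real.exp_sub]
    congr 2; ring
  have htwo : exp (-(p * δ ^ 2 / 8)) ≤ (2 : ℝ) ^ (-(1 / 8 * p * δ ^ 2)) := by
    rw [Real.rpow_def_of_pos two_pos]
    apply Real.exp_le_exp.2
    have hl : Real.log 2 ≤ 1 := by linarith [Real.log_two_lt_d9]
    have : 0 ≤ p * δ ^ 2 := by positivity
    nlinarith
  rw [← compl_compl {ω | v ⬝ᵥ P ω *ᵥ w ≤ ((p : ℝ) / n) * (v ⬝ᵥ w + δ)},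
    prob_compl_eq_one_sub hmS.compl, ENNReal.ofReal_sub _ (by positivity), ENNReal.ofReal_one]
  exact tsub_le_tsub_left (hbad.trans (ENNReal.ofReal_le_ofReal htwo)) 1

end
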